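/- Let g : ℝ^N → ℝ be defined by g(z) = (1/2)‖z − 1_N‖₁ + (1/2)‖z + 1_N‖₁, and let ξ : ℝ → ℝ be defined by ξ(α) = α + 1 if α < −2; ξ(α) = −1 if −2 ≤ α < −1; ξ(α) = α if −1 ≤ α < 1; ξ(α) = 1 if 1 ≤ α < 2; ξ(α) = α − 1 if α ≥ 2. Then the proximity operator of g satisfies prox_g(z) = [ξ(z₁), ξ(z₂), …, ξ(z_N)]ᵀ for every z ∈ ℝ^N, i.e., the vector whose i-th component is ξ(z_i) is the unique minimizer over u ∈ ℝ^N of g(u) + (1/2)‖z − u‖₂². -/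

import Mathlib

/-!
The objective separates over coordinates, so everything reduces to one real variable, with
`f v = (|v - 1| + |v + 1|) / 2`. For each real `a`, the point `x = ξ a` is characterised by
`a - x` being a subgradient of `f` at `x`, that is `f x + (a - x) * (v - x) ≤ f v` for all `v`.
Completing the square turns this into
`f x + (a - x)² / 2 + (v - x)² / 2 ≤ f v + (a - v)² / 2` (`prox_scalar`). Summing over the
coordinates, the objective at `u` exceeds the objective at `(ξ (z i))ᵢ` by at least half the
squared distance between the two points, which gives minimality and uniqueness together.
-/

/-- The subgradient inequality for `(|v - 1| + |v + 1|) / 2`, with the square completed. The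
extra term `(v - x)² / 2` records strong convexity and is what yields uniqueness. -/
lemma prox_scalar (a x v : ℝ)
    (hx : x = if a < -2 then a + 1
      else if a < -1 then -1
      else if a < 1 then a
      else if a < 2 then 1
      else a - 1) :
    (1/2) * |x - 1| + (1/2) * |x + 1| + (1/2) * (a - x)^2 + (1/2) * (v - x)^2
      ≤ (1/2) * |v - 1| + (1/2) * |v + 1| + (1/2) * (a - v)^2 := by
  suffices h : (1/2) * |x - 1| + (1/2) * |x + 1| + (a - x) * (v - x)
      ≤ (1/2) * |v - 1| + (1/2) * |v + 1| by nlinarith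
  have h1 := le_abs_self (v - 1)
  have h2 := neg_le_abs (v - 1)
  have h3 := le_abs_self (v + 1)
  have h4 := neg_le_abs (v + 1)
  split_ifs at hx with c1 c2 c3 c4
  · rw [abs_of_nonpos (by linarith : x - 1 ≤ 0), abs_of_nonpos (by linarith : x + 1 ≤ 0)]
    have h : a - x = -1 := by linarith
    rw [h]
    linarith
  · subst hx
    rw [abs_of_nonpos (by norm_num : (-1 : ℝ) - 1 ≤ 0)]
    norm_num
    -- The slope `a + 1` lies in `[-1, 0]`, so only the sign of `v + 1` matters.
    rcases le_total (v + 1) 0 with h | h <;> nlinarith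
  · subst hx
    rw [abs_of_nonpos (by linarith : x - 1 ≤ 0), abs_of_nonneg (by linarith : 0 ≤ x + 1)]
    linarith
  · subst hx
    rw [abs_of_nonneg (by norm_num : (0 : ℝ) ≤ 1 + 1)]
    norm_num
    -- The slope `a - 1` lies in `[0, 1]`, so only the sign of `v - 1` matters.
    rcases le_total (v - 1) 0 with h | h <;> nlinarith
  · rw [abs_of_nonneg (by linarith : 0 ≤ x - 1), abs_of_nonneg (by linarith : 0 ≤ x + 1)]
    have h : a - x = 1 := by linarith
    rw [h]
    linarith

/-- the prox of g(z) = (1/2)‖z − 1_N‖₁ + (1/2)‖z + 1_N‖₁ is given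
componentwise by ξ, i.e. (ξ(z₁),…,ξ(z_N)) is the unique minimizer of
u ↦ g(u) + (1/2)‖z − u‖₂². -/
theorem stmt_0 (N : ℕ)
    (g : (Fin N → ℝ) → ℝ)
    (hg : ∀ z : Fin N → ℝ,
      g z = (1/2) * ∑ i, |z i - 1| + (1/2) * ∑ i, |z i + 1|)
    (ξ : ℝ → ℝ)
    (hξ : ∀ α : ℝ, ξ α =
      if α < -2 then α + 1
      else if α < -1 then -1
      else if α < 1 then α
      else if α < 2 then 1
      else α - 1)
    (z : Fin N → ℝ) :
    (∀ u : Fin N → ℝ,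
      g (fun i => ξ (z i)) + (1/2) * ∑ i, (z i - ξ (z i))^2
        ≤ g u + (1/2) * ∑ i, (z i - u i)^2) ∧
    (∀ u : Fin N → ℝ, u ≠ (fun i => ξ (z i)) →
      g (fun i => ξ (z i)) + (1/2) * ∑ i, (z i - ξ (z i))^2
        < g u + (1/2) * ∑ i, (z i - u i)^2) := by
  have key : ∀ u : Fin N → ℝ,
      g (fun i => ξ (z i)) + (1/2) * ∑ i, (z i - ξ (z i))^2 + (1/2) * ∑ i, (u i - ξ (z i))^2
        ≤ g u + (1/2) * ∑ i, (z i - u i)^2 := by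
    intro u
    simp only [hg, Finset.mul_sum, ← Finset.sum_add_distrib]
    exact Finset.sum_le_sum fun i _ => prox_scalar (z i) (ξ (z i)) (u i) (hξ (z i))
  refine ⟨fun u => ?_, fun u hu => ?_⟩
  · have h : 0 ≤ ∑ i, (u i - ξ (z i))^2 := Finset.sum_nonneg fun i _ => sq_nonneg _
    linarith [key u]
  · obtain ⟨j, hj⟩ := Function.ne_iff.mp hu
    have h : 0 < ∑ i, (u i - ξ (z i))^2 :=
      Finset.sum_pos' (fun i _ => sq_nonneg _)
        ⟨j, Finset.mem_univ j, sq_pos_of_ne_zero (sub_ne_zero.mpr hj)⟩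
    linarith [key u]
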